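/- Let P ≥ 0 be a natural number, let α > 1 be a real number, and for each p ∈ {0, 1, …, P} let n_p ≥ 0, τ_p ≥ 1, and k_p ≥ 1 be natural numbers such that k_q ≥ k_t whenever q ≤ t, and (α − 1)·∑_{q < p} τ_q ≤ τ_p for every p. With N_{>p} := ∑_{q > p} n_q, N_{≥p} := n_p + N_{>p}, Q_p := n_p·τ_p + ∑_{i=0}^{n_p − 1} ⌊i·τ_p/k_p⌋, S_p := ∑_{q < p}(⌊n_q·τ_q/k_q⌋ + τ_q), Δ_p := ⌈N_{>p}·τ_p/k_p⌉, and T_p := ∑_{q < p}(⌊N_{≥q}·τ_q/k_q⌋ + τ_q), the following holds: ∑_{p=0}^{P} n_p·(T_p + Δ_p) + ∑_{p=0}^{P} Q_p ≤ (2 + 2/(α − 1)) · (∑_{p=0}^{P} n_p·S_p + ∑_{p=0}^{P} Q_p). -/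

import Mathlib

/-!
Write `w q = τ q / k q`, `c = 1 / (α - 1)`, `M p = N_{≥p}`, so that `N_{>p} = M (p + 1)` and
`n p = M p - M (p + 1)`. Discarding the roundings in `T` and `Δ` and summing by parts bounds the
left-hand side by `2 X + Y + ∑ n p * ∑_{q<p} τ q + ∑ n p + ∑ Q p`, where
`X = ∑ w p * n p * M (p + 1)` and `Y = ∑ w p * M (p + 1) ^ 2`.

* Summing `Y` by parts gives `∑ (M p ^ 2 - M (p + 1) ^ 2) * ∑_{q<p} w q`. Monotonicity of `k` and
  the geometric hypothesis give `∑_{q<p} w q ≤ c * w p`, hence `Y ≤ c * ∑ w p * n p ^ 2 + 2 c X`.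
* `∑ n p * S p ≥ X`: each summand `τ q ≥ 1` of `S p` pays for the floor next to it.
* `2 * Q p ≥ n p ^ 2 * w p + n p * τ p` (`two_mul_Qlad_ge`). Multiplied by `c`, its first term pays
  for the diagonal part of `Y`, its second for `n p * ∑_{q<p} τ q`.
* The ceilings in `Δ` cost `∑ n p ≤ ∑ Q p`.
-/

/-- `N_{>p}`: the number of jobs in classes strictly greater than `p`. -/
def Ngt (P : ℕ) (n : ℕ → ℕ) (p : ℕ) : ℕ := ∑ q ∈ Finset.Icc (p + 1) P, n q

/-- `N_{≥p}`: the number of jobs in classes greater than or equal to `p`. -/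
def Nge (P : ℕ) (n : ℕ → ℕ) (p : ℕ) : ℕ := ∑ q ∈ Finset.Icc p P, n q

/-- Ladder term `Q_p = n_p·τ_p + ∑_{i=0}^{n_p−1} ⌊i·τ_p/k_p⌋`. -/
def Qlad (n τ k : ℕ → ℕ) (p : ℕ) : ℕ :=
  n p * τ p + ∑ i ∈ Finset.range (n p), i * τ p / k p

/-- Class-prefix term `S_p = ∑_{q<p} (⌊n_q·τ_q/k_q⌋ + τ_q)`. -/
def Spre (n τ k : ℕ → ℕ) (p : ℕ) : ℕ :=
  ∑ q ∈ Finset.range p, (n q * τ q / k q + τ q)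

/-- Phase spillover cost `Δ_p = ⌈N_{>p}·τ_p/k_p⌉`, with `⌈a/b⌉ = (a + b − 1)/b`
in natural-number division. -/
def Dspill (P : ℕ) (n τ k : ℕ → ℕ) (p : ℕ) : ℕ :=
  (Ngt P n p * τ p + k p - 1) / k p

/-- Phase-prefix cost `T_p = ∑_{q<p} (⌊N_{≥q}·τ_q/k_q⌋ + τ_q)`. -/
def Tpre (P : ℕ) (n τ k : ℕ → ℕ) (p : ℕ) : ℕ :=
  ∑ q ∈ Finset.range p, (Nge P n q * τ q / k q + τ q)

/-- Summation by parts, with the boundary term at `m` kept. -/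
lemma sum_by_parts (g b : ℕ → ℝ) (m : ℕ) :
    ∑ p ∈ Finset.range m, (g p - g (p + 1)) * ∑ q ∈ Finset.range p, b q =
      ∑ q ∈ Finset.range m, b q * g (q + 1) - g m * ∑ q ∈ Finset.range m, b q := by
  induction m with
  | zero => simp
  | succ m ih =>
    rw [Finset.sum_range_succ, ih, Finset.sum_range_succ, Finset.sum_range_succ]
    ring

/-- The ladder with unit slices, in closed form; the defect from `n ^ 2` is `r * (k - r)` with
`r = n % k`. -/
lemma unit_ladder (k : ℕ) (hk : 1 ≤ k) (n : ℕ) :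
    (k : ℤ) * (n + 2 * ∑ i ∈ Finset.range n, ((i / k : ℕ) : ℤ)) =
      (n : ℤ) ^ 2 + ((n % k : ℕ) : ℤ) * (k - ((n % k : ℕ) : ℤ)) := by
  induction n with
  | zero => simp
  | succ n ih =>
    rw [Finset.sum_range_succ]
    have hd : (k : ℤ) * ((n / k : ℕ) : ℤ) + ((n % k : ℕ) : ℤ) = n := by
      exact_mod_cast Nat.div_add_mod n k
    have hlt := Nat.mod_lt n hk
    -- The increment of `r * (k - r)` is `k - 2 r - 1` also when the residue wraps around to `0`.
    have hr : (((n + 1) % k : ℕ) : ℤ) * (k - (((n + 1) % k : ℕ) : ℤ)) =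
        ((n % k : ℕ) : ℤ) * (k - ((n % k : ℕ) : ℤ)) + (k - 2 * ((n % k : ℕ) : ℤ) - 1) := by
      rcases Nat.lt_or_ge (n % k + 1) k with h | h
      · have : (n + 1) % k = n % k + 1 := by
          rw [Nat.add_mod, Nat.mod_eq_of_lt (show 1 < k by omega), Nat.mod_eq_of_lt h]
        rw [this]; push_cast; ring
      · have h1 : n % k + 1 = k := by omega
        have : (n + 1) % k = 0 := by
          rw [← Nat.mod_add_mod, h1, Nat.mod_self]
        have h2 : (k : ℤ) = ((n % k : ℕ) : ℤ) + 1 := by exact_mod_cast h1.symm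
        rw [this, h2]; push_cast; ring
    rw [hr]
    push_cast at *
    linear_combination ih + 2 * hd

/-- Lower bound for the ladder that absorbs its floors, with equality when `k p = 1`. Since
`⌊iτ/k⌋ ≥ τ⌊i/k⌋`, it follows from the case of unit slices. -/
lemma two_mul_Qlad_ge (n τ k : ℕ → ℕ) (p : ℕ) (hk : 1 ≤ k p) :
    (n p : ℝ) ^ 2 * ((τ p : ℝ) / k p) + n p * τ p ≤ 2 * (Qlad n τ k p : ℝ) := by
  have h1 : (n p : ℤ) ^ 2 ≤
      (k p : ℤ) * (n p + 2 * ∑ i ∈ Finset.range (n p), ((i / k p : ℕ) : ℤ)) := by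
    rw [unit_ladder _ hk]
    have : ((n p % k p : ℕ) : ℤ) ≤ k p := by exact_mod_cast (Nat.mod_lt _ hk).le
    have := mul_nonneg (Int.natCast_nonneg (n p % k p)) (sub_nonneg.2 this)
    linarith
  have h1' : (n p : ℝ) ^ 2 ≤
      (k p : ℝ) * (n p + 2 * ∑ i ∈ Finset.range (n p), ((i / k p : ℕ) : ℝ)) := by
    exact_mod_cast h1
  have h2 : (τ p : ℝ) * ∑ i ∈ Finset.range (n p), ((i / k p : ℕ) : ℝ) ≤
      ∑ i ∈ Finset.range (n p), ((i * τ p / k p : ℕ) : ℝ) := by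
    rw [Finset.mul_sum]
    refine Finset.sum_le_sum fun i _ => ?_
    have : τ p * (i / k p) ≤ i * τ p / k p := by
      rw [mul_comm i]; exact Nat.mul_div_le_mul_div_assoc _ _ _
    exact_mod_cast this
  have hk0 : (0 : ℝ) < k p := by exact_mod_cast hk
  have h3 : (n p : ℝ) ^ 2 * ((τ p : ℝ) / k p) ≤
      τ p * (n p + 2 * ∑ i ∈ Finset.range (n p), ((i / k p : ℕ) : ℝ)) := by
    rw [← mul_div_assoc, div_le_iff₀ hk0]
    nlinarith [mul_le_mul_of_nonneg_right h1' (Nat.cast_nonneg (α := ℝ) (τ p))]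
  have hQ : (Qlad n τ k p : ℝ) =
      n p * τ p + ∑ i ∈ Finset.range (n p), ((i * τ p / k p : ℕ) : ℝ) := by
    unfold Qlad; push_cast; rfl
  rw [hQ]
  linarith

lemma sub_one_le_cast_div (a b : ℕ) (hb : 1 ≤ b) : (a : ℝ) / b - 1 ≤ ((a / b : ℕ) : ℝ) := by
  have hb0 : (0 : ℝ) < b := by exact_mod_cast hb
  rw [sub_le_iff_le_add, div_le_iff₀ hb0]
  have h : a ≤ (a / b + 1) * b := by
    rw [mul_comm]; exact (Nat.lt_mul_div_succ a hb).le
  exact_mod_cast h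

lemma Nge_eq_add (P : ℕ) (n : ℕ → ℕ) (p : ℕ) (hp : p ≤ P) :
    Nge P n p = n p + Nge P n (p + 1) := by
  unfold Nge
  rw [← Finset.insert_Icc_add_one_left_eq_Icc hp, Finset.sum_insert (by simp)]

lemma Spre_ge (P : ℕ) (n τ k : ℕ → ℕ) (hτ : ∀ p ≤ P, 1 ≤ τ p) (hk : ∀ p ≤ P, 1 ≤ k p)
    (p : ℕ) (hp : p ≤ P) :
    ∑ q ∈ Finset.range p, (n q : ℝ) * ((τ q : ℝ) / k q) ≤ (Spre n τ k p : ℝ) := by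
  unfold Spre
  push_cast
  refine Finset.sum_le_sum fun q hq => ?_
  have hq : q ≤ P := by have := Finset.mem_range.1 hq; omega
  have h1 := sub_one_le_cast_div (n q * τ q) (k q) (hk q hq)
  have h2 : (1 : ℝ) ≤ τ q := by exact_mod_cast hτ q hq
  push_cast at h1
  rw [← mul_div_assoc]
  linarith

lemma Tpre_le (P : ℕ) (n τ k : ℕ → ℕ) (p : ℕ) :
    (Tpre P n τ k p : ℝ) ≤
      ∑ q ∈ Finset.range p, (Nge P n q : ℝ) * ((τ q : ℝ) / k q) +
        ∑ q ∈ Finset.range p, (τ q : ℝ) := by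
  unfold Tpre
  push_cast
  rw [← Finset.sum_add_distrib]
  refine Finset.sum_le_sum fun q _ => ?_
  have h := Nat.cast_div_le (α := ℝ) (m := Nge P n q * τ q) (n := k q)
  push_cast at h
  rw [← mul_div_assoc]
  linarith

lemma Dspill_le (P : ℕ) (n τ k : ℕ → ℕ) (p : ℕ) (hk : 1 ≤ k p) :
    (Dspill P n τ k p : ℝ) ≤ (Nge P n (p + 1) : ℝ) * ((τ p : ℝ) / k p) + 1 := by
  have hk0 : (0 : ℝ) < k p := by exact_mod_cast hk
  have h : (Dspill P n τ k p : ℝ) ≤ ((Nge P n (p + 1) * τ p + k p : ℕ) : ℝ) / k p :=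
    (Nat.cast_le.2 (Nat.div_le_div_right (Nat.sub_le _ _))).trans Nat.cast_div_le
  push_cast at h
  rwa [add_div, div_self hk0.ne', mul_div_assoc] at h

/-- Combining step of the GSA competitive analysis:
`∑_p n_p·(T_p + Δ_p) + ∑_p Q_p ≤ (2 + 2/(α−1))·(∑_p n_p·S_p + ∑_p Q_p)`. -/
theorem stmt_15 (P : ℕ) (α : ℝ) (hα : 1 < α) (n τ k : ℕ → ℕ)
    (hτ : ∀ p ≤ P, 1 ≤ τ p) (hk : ∀ p ≤ P, 1 ≤ k p)
    (hmono : ∀ q t, q ≤ t → t ≤ P → k t ≤ k q)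
    (hgeo : ∀ p ≤ P, (α - 1) * ∑ q ∈ Finset.range p, (τ q : ℝ) ≤ (τ p : ℝ)) :
    (∑ p ∈ Finset.range (P + 1),
        (n p : ℝ) * ((Tpre P n τ k p : ℝ) + (Dspill P n τ k p : ℝ))) +
      ∑ p ∈ Finset.range (P + 1), (Qlad n τ k p : ℝ) ≤
    (2 + 2 / (α - 1)) *
      ((∑ p ∈ Finset.range (P + 1), (n p : ℝ) * (Spre n τ k p : ℝ)) +
        ∑ p ∈ Finset.range (P + 1), (Qlad n τ k p : ℝ)) := by
  have hα0 : 0 < α - 1 := sub_pos.2 hα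
  obtain ⟨c, hc⟩ : ∃ c : ℝ, c = 1 / (α - 1) := ⟨_, rfl⟩
  have hc0 : 0 < c := by rw [hc]; positivity
  have h2c : 2 + 2 / (α - 1) = 2 + 2 * c := by rw [hc]; ring
  rw [h2c]
  set w : ℕ → ℝ := fun q => (τ q : ℝ) / k q with hw
  set M : ℕ → ℝ := fun p => (Nge P n p : ℝ) with hM
  set R : ℕ → ℝ := fun p => ∑ q ∈ Finset.range p, (τ q : ℝ) with hR
  have hw0 : ∀ q, 0 ≤ w q := fun q => by positivity
  have hM0 : ∀ q, 0 ≤ M q := fun q => Nat.cast_nonneg _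
  have hMP : M (P + 1) = 0 := by simp [hM, Nge]
  have hMn : ∀ p ≤ P, M p - M (p + 1) = n p := fun p hp => by
    simp only [hM, Nge_eq_add P n p hp]; push_cast; ring
  have hRτ : ∀ p ≤ P, R p ≤ c * τ p := fun p hp => by
    rw [hc, one_div, inv_mul_eq_div, le_div_iff₀ hα0, mul_comm]
    exact hgeo p hp
  have hWw : ∀ p ≤ P, ∑ q ∈ Finset.range p, w q ≤ c * w p := fun p hp => by
    have hkp : (0 : ℝ) < k p := by exact_mod_cast hk p hp
    calc ∑ q ∈ Finset.range p, w q ≤ ∑ q ∈ Finset.range p, (τ q : ℝ) / k p := by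
          refine Finset.sum_le_sum fun q hq => ?_
          have : (k p : ℝ) ≤ k q := by
            exact_mod_cast hmono q p (Finset.mem_range.1 hq).le hp
          exact div_le_div_of_nonneg_left (Nat.cast_nonneg _) hkp this
      _ = R p / k p := by rw [Finset.sum_div]
      _ ≤ c * τ p / k p := div_le_div_of_nonneg_right (hRτ p hp) hkp.le
      _ = c * w p := mul_div_assoc _ _ _
  -- The boundary term of the summation by parts vanishes, because `M (P + 1) = 0`.
  have parts : ∀ b : ℕ → ℝ, ∑ p ∈ Finset.range (P + 1), (n p : ℝ) * ∑ q ∈ Finset.range p, b q =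
      ∑ q ∈ Finset.range (P + 1), b q * M (q + 1) := fun b => by
    have h := sum_by_parts M b (P + 1)
    rw [hMP, zero_mul, sub_zero] at h
    rw [← h]
    refine Finset.sum_congr rfl fun p hp => ?_
    rw [hMn p (by have := Finset.mem_range.1 hp; omega)]
  have hX := parts fun q => (n q : ℝ) * w q
  have hT := parts fun q => M q * w q
  have hY := sum_by_parts (fun p => M p ^ 2) w (P + 1)
  simp only [hMP] at hY
  have hYle : ∑ p ∈ Finset.range (P + 1), (M p ^ 2 - M (p + 1) ^ 2) * ∑ q ∈ Finset.range p, w q ≤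
      ∑ p ∈ Finset.range (P + 1), (c * ((n p : ℝ) ^ 2 * w p) +
        2 * c * ((n p : ℝ) * w p * M (p + 1))) := by
    refine Finset.sum_le_sum fun p hp => ?_
    have hp : p ≤ P := by have := Finset.mem_range.1 hp; omega
    have e : M p = n p + M (p + 1) := by linarith [hMn p hp]
    have h0 : 0 ≤ M p ^ 2 - M (p + 1) ^ 2 := by
      have := mul_nonneg (Nat.cast_nonneg (α := ℝ) (n p)) (hM0 (p + 1))
      rw [e]; nlinarith [sq_nonneg (n p : ℝ)]
    refine (mul_le_mul_of_nonneg_left (hWw p hp) h0).trans (le_of_eq ?_)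
    rw [e]; ring
  have hTsplit : ∑ q ∈ Finset.range (P + 1), M q * w q * M (q + 1) =
      ∑ q ∈ Finset.range (P + 1), (n q : ℝ) * w q * M (q + 1) +
        ∑ q ∈ Finset.range (P + 1), w q * M (q + 1) ^ 2 := by
    rw [← Finset.sum_add_distrib]
    refine Finset.sum_congr rfl fun p hp => ?_
    rw [← hMn p (by have := Finset.mem_range.1 hp; omega)]
    ring
  have hL : ∑ p ∈ Finset.range (P + 1),
        (n p : ℝ) * ((Tpre P n τ k p : ℝ) + (Dspill P n τ k p : ℝ)) ≤
      ∑ p ∈ Finset.range (P + 1), ((n p : ℝ) * ∑ q ∈ Finset.range p, M q * w q +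
        (n p : ℝ) * w p * M (p + 1) + ((n p : ℝ) * R p + n p)) := by
    refine Finset.sum_le_sum fun p hp => ?_
    have hp : p ≤ P := by have := Finset.mem_range.1 hp; omega
    have h := mul_le_mul_of_nonneg_left
      (add_le_add (Tpre_le P n τ k p) (Dspill_le P n τ k p (hk p hp)))
      (Nat.cast_nonneg (α := ℝ) (n p))
    refine h.trans (le_of_eq ?_)
    simp only [hw, hM, hR]
    ring
  have hS : ∑ p ∈ Finset.range (P + 1), (n p : ℝ) * ∑ q ∈ Finset.range p, (n q : ℝ) * w q ≤
      ∑ p ∈ Finset.range (P + 1), (n p : ℝ) * (Spre n τ k p : ℝ) :=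
    Finset.sum_le_sum fun p hp => mul_le_mul_of_nonneg_left
      (Spre_ge P n τ k hτ hk p (by have := Finset.mem_range.1 hp; omega)) (Nat.cast_nonneg _)
  have hQ : ∑ p ∈ Finset.range (P + 1),
        (c * ((n p : ℝ) ^ 2 * w p) + ((n p : ℝ) * R p + n p)) ≤
      ∑ p ∈ Finset.range (P + 1), (1 + 2 * c) * (Qlad n τ k p : ℝ) := by
    refine Finset.sum_le_sum fun p hp => ?_
    have hp : p ≤ P := by have := Finset.mem_range.1 hp; omega
    have h1 := mul_le_mul_of_nonneg_left (two_mul_Qlad_ge n τ k p (hk p hp)) hc0.le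
    have h2 := mul_le_mul_of_nonneg_left (hRτ p hp) (Nat.cast_nonneg (α := ℝ) (n p))
    have h3 : (n p : ℝ) ≤ (Qlad n τ k p : ℝ) := by
      have : n p ≤ Qlad n τ k p :=
        (Nat.le_mul_of_pos_right _ (hτ p hp)).trans (Nat.le_add_right _ _)
      exact_mod_cast this
    simp only [hw]
    nlinarith
  have hS' := mul_le_mul_of_nonneg_left hS (show 0 ≤ 2 + 2 * c by positivity)
  simp only [Finset.sum_add_distrib, ← Finset.mul_sum] at hYle hL hQ hT hX hS' ⊢
  rw [hX] at hS'
  rw [hT, hTsplit] at hL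
  linarith
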